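/- Let λ ⊆ ℕ^n be a finite nonempty order ideal. Then Σ_{u ∈ λ∖{0}} W_T(u) = Σ_{u ∈ λ∖{0}} W_B(u) holds if and only if the following three conditions hold: (1) for all 1 ≤ k ≤ n and α > 0, if α·e_k ∈ λ then α ≤ 4; (2) for all 1 ≤ k₁ < k₂ ≤ n and α₁, α₂ > 0, if α₁·e_{k₁} + α₂·e_{k₂} ∈ λ then α₁ + α₂ ≤ 3; (3) no element of λ has three or more nonzero coordinates. (This characterizes the admissible partitions, i.e. the torus-fixed points contributing nontrivially to the virtual localization formula.) -/

import Mathlib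

/-!
Both sums are compared term by term. Since `Λ` is an order ideal, `WT Λ u` and `WB Λ u` for
`u ∈ Λ` count all decompositions of `u` into two, respectively three, nonzero vectors of `ℕ^n`.
It suffices to show that `WT Λ u ≤ WB Λ u` for every nonzero `u ∈ Λ`, with equality exactly when
`u` itself violates none of the three conditions (`Good u`).

Let `T` be the number of triples counted by `WB` and `D` the number of ordered decompositions
`u = v + w`, so that `T` is even, `WB = T / 2`, and `2 (WT + 1) ≤ D + 1` for `u` not a unit vector.
Fix a coordinate `i` in the support of `u`, with `u i ≥ 2` unless all coordinates of `u` are at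
most `1`. Splitting off one `e_i` from `v` or from `w` injects all but two of the ordered
decompositions into the triples (`card_between_le`), so `D ≤ T + 2` and, by parity, `WT ≤ WB`.
If `u` is not good, two triples `(w, s, e_i)` outside the image can be exhibited, so `D ≤ T` and
the inequality is strict (`lt_of_not_good`). The good vectors are
`e_i, 2e_i, 3e_i, 4e_i, e_i + e_j, 2e_i + e_j`, for which the reverse inequality is checked
directly (`ge_of_good`).
-/

/-- A finite *order ideal* in `ℕ^n`: a finite set of exponent vectors closed under
taking coordinatewise smaller vectors. -/
def IsOrderIdeal {n : ℕ} (Λ : Finset (Fin n → ℕ)) : Prop :=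
  ∀ u ∈ Λ, ∀ v : Fin n → ℕ, v ≤ u → v ∈ Λ

/-- `WT Λ u`: it is `0` if `u` is a standard unit vector, and otherwise the number of
unordered pairs `{v, w}` with `v, w ∈ Λ \ {0}` and `v + w = u` (with `v = w` allowed),
minus `1`. -/
def WT {n : ℕ} (Λ : Finset (Fin n → ℕ)) (u : Fin n → ℕ) : ℤ :=
  if ∃ i : Fin n, u = Pi.single i 1 then 0
  else (((Λ.erase 0).sym2.filter
      (fun p => Sym2.lift ⟨fun v w => v + w, fun _ _ => add_comm _ _⟩ p = u)).card : ℤ) - 1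

/-- `WB Λ u`: half the number of ordered triples `(v, s, w) ∈ (Λ \ {0})³` with `v ≠ w`
and `v + s + w = u`. -/
def WB {n : ℕ} (Λ : Finset (Fin n → ℕ)) (u : Fin n → ℕ) : ℕ :=
  (((Λ.erase 0) ×ˢ (Λ.erase 0) ×ˢ (Λ.erase 0)).filter
      (fun t => t.1 ≠ t.2.2 ∧ t.1 + t.2.1 + t.2.2 = u)).card / 2

/-! ### Triples, unordered pairs and ordered decompositions -/

/-- The ordered triples whose number is halved in `WB`. -/
def triples {n : ℕ} (Λ : Finset (Fin n → ℕ)) (u : Fin n → ℕ) :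
    Finset ((Fin n → ℕ) × (Fin n → ℕ) × (Fin n → ℕ)) :=
  ((Λ.erase 0) ×ˢ (Λ.erase 0) ×ˢ (Λ.erase 0)).filter
      (fun t => t.1 ≠ t.2.2 ∧ t.1 + t.2.1 + t.2.2 = u)

/-- The unordered pairs counted by `WT`. -/
def upairs {n : ℕ} (Λ : Finset (Fin n → ℕ)) (u : Fin n → ℕ) : Finset (Sym2 (Fin n → ℕ)) :=
  (Λ.erase 0).sym2.filter
      (fun p => Sym2.lift ⟨fun v w => v + w, fun _ _ => add_comm _ _⟩ p = u)

/-- The vectors strictly between `0` and `u`; for `u` in an order ideal `Λ`, the element `v`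
stands for the ordered decomposition `u = v + (u - v)`. -/
def between {n : ℕ} (Λ : Finset (Fin n → ℕ)) (u : Fin n → ℕ) : Finset (Fin n → ℕ) :=
  (Λ.erase 0).filter (fun v => (∀ k, v k ≤ u k) ∧ v ≠ u)

lemma mem_triples {n : ℕ} {Λ : Finset (Fin n → ℕ)} (hΛ : IsOrderIdeal Λ) {u : Fin n → ℕ}
    (hu : u ∈ Λ) (v s w : Fin n → ℕ) :
    (v, s, w) ∈ triples Λ u ↔ v ≠ 0 ∧ s ≠ 0 ∧ w ≠ 0 ∧ v ≠ w ∧ v + s + w = u := by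
  simp only [triples, Finset.mem_filter, Finset.mem_product, Finset.mem_erase]
  constructor
  · tauto
  · rintro ⟨hv, hs, hw, hvw, rfl⟩
    refine ⟨⟨⟨hv, hΛ _ hu _ ?_⟩, ⟨hs, hΛ _ hu _ ?_⟩, ⟨hw, hΛ _ hu _ ?_⟩⟩, hvw, rfl⟩ <;>
      intro k <;> simp only [Pi.add_apply] <;> omega

lemma mem_upairs {n : ℕ} {Λ : Finset (Fin n → ℕ)} (hΛ : IsOrderIdeal Λ) {u : Fin n → ℕ}
    (hu : u ∈ Λ) (v w : Fin n → ℕ) :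
    s(v, w) ∈ upairs Λ u ↔ v ≠ 0 ∧ w ≠ 0 ∧ v + w = u := by
  simp only [upairs, Finset.mem_filter, Finset.mk_mem_sym2_iff, Finset.mem_erase, Sym2.lift_mk]
  constructor
  · tauto
  · rintro ⟨hv, hw, rfl⟩
    refine ⟨⟨⟨hv, hΛ _ hu _ ?_⟩, ⟨hw, hΛ _ hu _ ?_⟩⟩, rfl⟩ <;>
      intro k <;> simp only [Pi.add_apply] <;> omega

lemma mem_between {n : ℕ} {Λ : Finset (Fin n → ℕ)} (hΛ : IsOrderIdeal Λ) {u : Fin n → ℕ}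
    (hu : u ∈ Λ) (v : Fin n → ℕ) :
    v ∈ between Λ u ↔ v ≠ 0 ∧ v ≤ u ∧ v ≠ u := by
  simp only [between, Finset.mem_filter, Finset.mem_erase]
  constructor
  · tauto
  · rintro ⟨hv, hw, h⟩
    exact ⟨⟨hv, hΛ _ hu _ hw⟩, hw, h⟩

/-- Swapping the outer entries is a fixed-point-free involution on the triples. -/
lemma even_card_triples {n : ℕ} {Λ : Finset (Fin n → ℕ)} (hΛ : IsOrderIdeal Λ) {u : Fin n → ℕ}
    (hu : u ∈ Λ) : Even (triples Λ u).card := by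
  have h : ∑ _t ∈ triples Λ u, (1 : ZMod 2) = 0 := by
    refine Finset.sum_involution (fun t _ => (t.2.2, t.2.1, t.1)) ?_ ?_ ?_ ?_
    · intros; decide
    · rintro ⟨v, s, w⟩ ht _ h
      rw [mem_triples hΛ hu] at ht
      simp only [Prod.mk.injEq] at h
      exact ht.2.2.2.1 h.2.2
    · rintro ⟨v, s, w⟩ ht
      rw [mem_triples hΛ hu] at ht ⊢
      obtain ⟨h1, h2, h3, h4, h5⟩ := ht
      refine ⟨h3, h2, h1, h4.symm, ?_⟩
      rw [← h5]; abel
    · rintro ⟨v, s, w⟩ _; rfl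
  simp only [Finset.sum_const, nsmul_eq_mul, mul_one] at h
  rwa [ZMod.natCast_eq_zero_iff_even] at h

/-- Every unordered decomposition comes from two ordered ones, except for at most one
decomposition `u = v + v`. -/
lemma two_mul_card_upairs_le {n : ℕ} {Λ : Finset (Fin n → ℕ)} (hΛ : IsOrderIdeal Λ)
    {u : Fin n → ℕ} (hu : u ∈ Λ) :
    2 * (upairs Λ u).card ≤ (between Λ u).card + 1 := by
  classical
  have hsub : ∀ v w : Fin n → ℕ, v + w = u → u - v = w := by
    rintro v w rfl
    exact add_tsub_cancel_left v w
  have hmap : ∀ v ∈ between Λ u, s(v, u - v) ∈ upairs Λ u := by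
    intro v hv
    rw [mem_between hΛ hu] at hv
    rw [mem_upairs hΛ hu]
    refine ⟨hv.1, ?_, add_tsub_cancel_of_le hv.2.1⟩
    intro h
    exact hv.2.2 (le_antisymm hv.2.1 (tsub_eq_zero_iff_le.1 h))
  have hmem : ∀ v w : Fin n → ℕ, s(v, w) ∈ upairs Λ u → v ∈ between Λ u := by
    intro v w h
    rw [mem_upairs hΛ hu] at h
    rw [mem_between hΛ hu]
    obtain ⟨h1, h2, rfl⟩ := h
    refine ⟨h1, le_self_add, ?_⟩
    intro h
    exact h2 (left_eq_add.1 h)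
  have hfib := Finset.card_eq_sum_card_fiberwise (f := fun v => s(v, u - v)) hmap
  have hdiag : ((upairs Λ u).filter (fun p => p.IsDiag)).card ≤ 1 := by
    rw [Finset.card_le_one]
    intro p hp q hq
    induction p using Sym2.ind with | _ a b =>
    induction q using Sym2.ind with | _ c d =>
    simp only [Finset.mem_filter, Sym2.mk_isDiag_iff, mem_upairs hΛ hu] at hp hq
    obtain ⟨⟨_, _, h1⟩, rfl⟩ := hp
    obtain ⟨⟨_, _, h2⟩, rfl⟩ := hq
    have : a = c := by
      funext k
      have h1 := congrFun h1 k
      have h2 := congrFun h2 k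
      simp only [Pi.add_apply] at h1 h2
      omega
    rw [this]
  have hlow : ∀ p ∈ upairs Λ u, 2 ≤
      ((between Λ u).filter (fun v => s(v, u - v) = p)).card + if p.IsDiag then 1 else 0 := by
    intro p hp
    induction p using Sym2.ind with | _ a b =>
    have ha := hmem a b hp
    have hb := hmem b a (by rwa [Sym2.eq_swap])
    have hab := ((mem_upairs hΛ hu a b).1 hp).2.2
    have e1 := hsub a b hab
    have e2 := hsub b a (by rw [add_comm, hab])
    have hsub2 : ({a, b} : Finset _) ⊆ (between Λ u).filter (fun v => s(v, u - v) = s(a, b)) := by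
      intro x hx
      simp only [Finset.mem_insert, Finset.mem_singleton] at hx
      rcases hx with rfl | rfl
      · simp [ha, e1]
      · simp [hb, e2]
    have := Finset.card_le_card hsub2
    by_cases h : a = b
    · subst h
      simp at this ⊢
      omega
    · rw [Finset.card_pair h] at this
      omega
  have := Finset.sum_le_sum hlow
  rw [Finset.sum_add_distrib, ← hfib, ← Finset.card_filter] at this
  simp only [Finset.sum_const, smul_eq_mul] at this
  omega

/-! ### The inequality `WT ≤ WB` -/

/-- The counting estimate behind the theorem. With `e = e_i`, an ordered decomposition `(v, u - v)`
other than `(e, u - e)` and `(u - e, e)` is sent to the triple `(e, v - e, u - v)` if `v i > 0`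
and to `(v, e, u - v - e)` if `v i = 0`; this is injective, so there are at most two more ordered
decompositions than triples. The elements `w` of `E` give further triples `(w, u - e - w, e)`
outside the image. -/
lemma card_between_le {n : ℕ} {Λ : Finset (Fin n → ℕ)} (hΛ : IsOrderIdeal Λ) {u : Fin n → ℕ}
    (hu : u ∈ Λ) (i : Fin n) (hi : 1 ≤ u i) (h : 2 ≤ u i ∨ ∀ k, u k ≤ 1)
    (E : Finset (Fin n → ℕ))
    (hE : ∀ w ∈ E, w ≠ 0 ∧ w ≠ Pi.single i 1 ∧ ∃ s, s ≠ 0 ∧ w + s + Pi.single i 1 = u ∧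
      (s ≠ Pi.single i 1 ∨ 0 < w i)) :
    E.card + (between Λ u).card ≤ (triples Λ u).card + 2 := by
  set e : Fin n → ℕ := Pi.single i 1 with he
  have hei : e i = 1 := by simp [he]
  have hek : ∀ k, k ≠ i → e k = 0 := fun k hk => by simp [he, hk]
  have he0 : e ≠ 0 := fun h => by simp [h] at hei
  have hle : ∀ v : Fin n → ℕ, 0 < v i → e ≤ v := by
    intro v hv k
    by_cases hk : k = i
    · rw [hk, hei]; exact hv
    · rw [hek k hk]; exact Nat.zero_le _
  set D' := between Λ u \ {e, u - e} with hD'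
  have hDcard : (between Λ u).card ≤ D'.card + 2 := by
    have h1 := Finset.le_card_sdiff ({e, u - e} : Finset (Fin n → ℕ)) (between Λ u)
    have h2 : ({e, u - e} : Finset (Fin n → ℕ)).card ≤ 2 := Finset.card_le_two
    rw [← hD'] at h1
    omega
  have hmemD : ∀ v ∈ D', v ≠ 0 ∧ v ≤ u ∧ v ≠ u ∧ v ≠ e ∧ v ≠ u - e := by
    intro v hv
    simp only [hD', Finset.mem_sdiff, mem_between hΛ hu, Finset.mem_insert,
      Finset.mem_singleton] at hv
    tauto
  let φ : (Fin n → ℕ) → (Fin n → ℕ) × (Fin n → ℕ) × (Fin n → ℕ) := fun v =>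
    if 0 < v i then (e, v - e, u - v) else (v, e, u - v - e)
  let ψ : (Fin n → ℕ) → (Fin n → ℕ) × (Fin n → ℕ) × (Fin n → ℕ) := fun w => (w, u - e - w, e)
  have hφinj : Set.InjOn φ D' := by
    intro v hv w hw hvw
    obtain ⟨hv0, hvu, hvu', hve, hvue⟩ := hmemD v hv
    obtain ⟨hw0, hwu, hwu', hwe, hwue⟩ := hmemD w hw
    simp only [φ] at hvw
    split_ifs at hvw with h1 h2 h2
    · simp only [Prod.mk.injEq, true_and] at hvw
      rw [← tsub_add_cancel_of_le (hle v h1), ← tsub_add_cancel_of_le (hle w h2), hvw.1]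
    · simp only [Prod.mk.injEq] at hvw
      exact absurd hvw.1.symm hwe
    · simp only [Prod.mk.injEq] at hvw
      exact absurd hvw.1 hve
    · simp only [Prod.mk.injEq] at hvw
      exact hvw.1
  have hψinj : Set.InjOn ψ E := by
    intro v _ w _ hvw
    simp only [ψ, Prod.mk.injEq] at hvw
    exact hvw.1
  have hφmem : ∀ v ∈ D', φ v ∈ triples Λ u := by
    intro v hv
    obtain ⟨hv0, hvu, hvu', hve, hvue⟩ := hmemD v hv
    simp only [φ]
    split_ifs with h1
    · rw [mem_triples hΛ hu]
      refine ⟨he0, ?_, ?_, ?_, ?_⟩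
      · intro h0
        exact hve (le_antisymm (tsub_eq_zero_iff_le.1 h0) (hle v h1))
      · intro h0
        exact hvu' (le_antisymm hvu (tsub_eq_zero_iff_le.1 h0))
      · intro h0
        apply hvue
        rw [h0, tsub_tsub_cancel_of_le hvu]
      · rw [add_tsub_cancel_of_le (hle v h1), add_tsub_cancel_of_le hvu]
    · have hsum : v + e + (u - v - e) = u := by
        funext k
        have : v k ≤ u k := hvu k
        by_cases hk : k = i
        · subst hk
          simp only [Pi.add_apply, Pi.sub_apply, hei]
          omega
        · simp only [Pi.add_apply, Pi.sub_apply, hek k hk]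
          omega
      rw [mem_triples hΛ hu]
      refine ⟨hv0, he0, ?_, ?_, hsum⟩
      · intro h0
        rw [h0, add_zero] at hsum
        apply hvue
        rw [← hsum, add_tsub_cancel_right]
      · -- here `u = 2 v + e` with `v i = 0`, so `u i = 1`, hence `u ≤ 1` and `v = 0`
        intro h0
        rw [← h0] at hsum
        have hk' : ∀ k, u k = 2 * v k + e k := by
          intro k
          rw [← hsum]
          simp only [Pi.add_apply]
          omega
        have hui : u i = 1 := by rw [hk', hei]; omega
        have h1' : ∀ k, u k ≤ 1 := by
          rcases h with h | h
          · omega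
          · exact h
        apply hv0
        funext k
        have := hk' k
        have := h1' k
        simp only [Pi.zero_apply]
        omega
  have hψmem : ∀ w ∈ E, ψ w ∈ triples Λ u := by
    intro w hw
    obtain ⟨hw0, hwe, s, hs, hsum, _⟩ := hE w hw
    have : u - e - w = s := by
      rw [← hsum, add_tsub_cancel_right, add_tsub_cancel_left]
    simp only [ψ, this]
    rw [mem_triples hΛ hu]
    exact ⟨hw0, hs, he0, hwe, hsum⟩
  have hdisj : Disjoint (D'.image φ) (E.image ψ) := by
    rw [Finset.disjoint_left]
    intro t ht ht'
    obtain ⟨v, hv, rfl⟩ := Finset.mem_image.1 ht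
    obtain ⟨w, hw, hwv⟩ := Finset.mem_image.1 ht'
    obtain ⟨hw0, hwe, s, hs, hsum, hor⟩ := hE w hw
    have hs' : u - e - w = s := by
      rw [← hsum, add_tsub_cancel_right, add_tsub_cancel_left]
    simp only [φ, ψ, hs'] at hwv
    split_ifs at hwv with h1
    · simp only [Prod.mk.injEq] at hwv
      exact hwe hwv.1
    · simp only [Prod.mk.injEq] at hwv
      obtain ⟨rfl, rfl, _⟩ := hwv
      rcases hor with h | h
      · exact h rfl
      · exact h1 h
  have hsub : D'.image φ ∪ E.image ψ ⊆ triples Λ u := by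
    intro t ht
    rw [Finset.mem_union, Finset.mem_image, Finset.mem_image] at ht
    rcases ht with ⟨v, hv, rfl⟩ | ⟨v, hv, rfl⟩
    · exact hφmem v hv
    · exact hψmem v hv
  have := Finset.card_le_card hsub
  rw [Finset.card_union_of_disjoint hdisj, Finset.card_image_of_injOn hφinj,
    Finset.card_image_of_injOn hψinj] at this
  omega

lemma WT_of_not_unit {n : ℕ} (Λ : Finset (Fin n → ℕ)) {u : Fin n → ℕ}
    (hu : ¬ ∃ i : Fin n, u = Pi.single i 1) : WT Λ u = ((upairs Λ u).card : ℤ) - 1 := by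
  rw [WT, if_neg hu]; rfl

lemma WB_eq {n : ℕ} (Λ : Finset (Fin n → ℕ)) (u : Fin n → ℕ) :
    WB Λ u = (triples Λ u).card / 2 := rfl

lemma WT_le_WB {n : ℕ} {Λ : Finset (Fin n → ℕ)} (hΛ : IsOrderIdeal Λ) {u : Fin n → ℕ}
    (hu : u ∈ Λ) (hu0 : u ≠ 0) : WT Λ u ≤ WB Λ u := by
  by_cases hunit : ∃ i : Fin n, u = Pi.single i 1
  · rw [WT, if_pos hunit]; positivity
  rw [WT_of_not_unit Λ hunit, WB_eq]
  obtain ⟨i, hi, h⟩ : ∃ i, 1 ≤ u i ∧ (2 ≤ u i ∨ ∀ k, u k ≤ 1) := by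
    by_cases h : ∃ i, 2 ≤ u i
    · obtain ⟨i, hi⟩ := h
      exact ⟨i, by omega, Or.inl hi⟩
    · push Not at h
      obtain ⟨i, hi⟩ := Function.ne_iff.1 hu0
      exact ⟨i, Nat.one_le_iff_ne_zero.2 hi, Or.inr fun k => Nat.lt_succ_iff.1 (h k)⟩
  have h1 := card_between_le hΛ hu i hi h ∅ (by simp)
  have h2 := two_mul_card_upairs_le hΛ hu
  obtain ⟨m, hm⟩ := even_card_triples hΛ hu
  simp only [Finset.card_empty] at h1
  omega

/-! ### Strict inequality at vectors that are not good -/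

/-- Two extra triples in `card_between_le` make the inequality strict. -/
lemma WT_lt_WB_of_two {n : ℕ} {Λ : Finset (Fin n → ℕ)} (hΛ : IsOrderIdeal Λ) {u : Fin n → ℕ}
    (hu : u ∈ Λ) (i : Fin n) (hi : 1 ≤ u i) (h : 2 ≤ u i ∨ ∀ k, u k ≤ 1)
    (w₁ w₂ : Fin n → ℕ) (hne : w₁ ≠ w₂)
    (h₁ : w₁ ≠ 0 ∧ w₁ ≠ Pi.single i 1 ∧ ∃ s, s ≠ 0 ∧ w₁ + s + Pi.single i 1 = u ∧
      (s ≠ Pi.single i 1 ∨ 0 < w₁ i))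
    (h₂ : w₂ ≠ 0 ∧ w₂ ≠ Pi.single i 1 ∧ ∃ s, s ≠ 0 ∧ w₂ + s + Pi.single i 1 = u ∧
      (s ≠ Pi.single i 1 ∨ 0 < w₂ i)) :
    WT Λ u < WB Λ u := by
  classical
  have hunit : ¬ ∃ j : Fin n, u = Pi.single j 1 := by
    rintro ⟨j, hj⟩
    obtain ⟨h0, _, s, _, hsum, _⟩ := h₁
    apply h0
    have hij : i = j := by
      by_contra hij
      rw [hj, Pi.single_eq_of_ne hij] at hi
      omega
    subst hij
    funext k
    have := congrFun (hsum.trans hj) k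
    simp only [Pi.add_apply] at this
    simp only [Pi.zero_apply]
    omega
  rw [WT_of_not_unit Λ hunit, WB_eq]
  have e1 := card_between_le hΛ hu i hi h {w₁, w₂} (by
    intro w hw
    simp only [Finset.mem_insert, Finset.mem_singleton] at hw
    rcases hw with rfl | rfl
    · exact h₁
    · exact h₂)
  have e2 := two_mul_card_upairs_le hΛ hu
  obtain ⟨m, hm⟩ := even_card_triples hΛ hu
  rw [Finset.card_pair hne] at e1
  omega

/-- The conditions on `u` alone that the three conditions of the theorem impose. -/
def Good {n : ℕ} (u : Fin n → ℕ) : Prop :=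
  (∀ (k : Fin n) (α : ℕ), 0 < α → Pi.single k α = u → α ≤ 4) ∧
  (∀ k₁ k₂ : Fin n, k₁ < k₂ → ∀ α₁ α₂ : ℕ, 0 < α₁ → 0 < α₂ →
    Pi.single k₁ α₁ + Pi.single k₂ α₂ = u → α₁ + α₂ ≤ 3) ∧
  (Finset.univ.filter (fun i : Fin n => u i ≠ 0)).card ≤ 2

/-- The extra triples come from `w = 2 e_i` and `w = 3 e_i`. -/
lemma lt_of_single {n : ℕ} {Λ : Finset (Fin n → ℕ)} (hΛ : IsOrderIdeal Λ) (i : Fin n) (α : ℕ)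
    (hα : 5 ≤ α) (hu : Pi.single i α ∈ Λ) : WT Λ (Pi.single i α) < WB Λ (Pi.single i α) := by
  have hs : ∀ a b : ℕ, a ≠ b → (Pi.single i a : Fin n → ℕ) ≠ Pi.single i b :=
    fun a b hab h => hab (Pi.single_injective i h)
  have hs0 : ∀ a : ℕ, a ≠ 0 → (Pi.single i a : Fin n → ℕ) ≠ 0 := by
    intro a ha h
    exact ha (Pi.single_eq_zero_iff.1 h)
  refine WT_lt_WB_of_two hΛ hu i (by simp; omega) (Or.inl (by simp; omega))
    (Pi.single i 2) (Pi.single i 3) (hs _ _ (by omega))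
    ⟨hs0 _ (by omega), hs _ _ (by omega), Pi.single i (α - 3), hs0 _ (by omega), ?_,
      Or.inr (by simp)⟩
    ⟨hs0 _ (by omega), hs _ _ (by omega), Pi.single i (α - 4), hs0 _ (by omega), ?_,
      Or.inr (by simp)⟩
  · rw [← Pi.single_add, ← Pi.single_add]; congr 1; omega
  · rw [← Pi.single_add, ← Pi.single_add]; congr 1; omega

/-- The extra triples come from `w = e_j` and `w = e_i + e_j`. -/
lemma lt_of_two {n : ℕ} {Λ : Finset (Fin n → ℕ)} (hΛ : IsOrderIdeal Λ) {u : Fin n → ℕ}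
    (hu : u ∈ Λ) (i j : Fin n) (hij : i ≠ j) (hi : 2 ≤ u i) (hj : 1 ≤ u j)
    (hne : u ≠ Pi.single i 2 + Pi.single j 1) : WT Λ u < WB Λ u := by
  have hle : (Pi.single i 2 + Pi.single j 1 : Fin n → ℕ) ≤ u := by
    intro k
    by_cases h1 : k = i
    · subst h1; simp [hij]; omega
    · by_cases h2 : k = j
      · subst h2; simp [h1]; omega
      · simp [h1, h2]
  obtain ⟨r, rfl⟩ := exists_add_of_le hle
  have hr : r ≠ 0 := by rintro rfl; simp at hne
  have h2 : (Pi.single i 2 : Fin n → ℕ) = Pi.single i 1 + Pi.single i 1 := by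
    rw [← Pi.single_add]
  have key : ∀ (v w : Fin n → ℕ) k, v k ≠ w k → v ≠ w := fun v w k h h' => h (by rw [h'])
  refine WT_lt_WB_of_two hΛ hu i (by omega) (Or.inl hi)
    (Pi.single j 1) (Pi.single i 1 + Pi.single j 1) (key _ _ i (by simp [hij]))
    ⟨key _ _ j (by simp), key _ _ j (by simp [hij.symm]), r + Pi.single i 1,
      key _ _ i (by simp), ?_, Or.inl ?_⟩
    ⟨key _ _ j (by simp), key _ _ j (by simp [hij.symm]), r, hr, ?_, Or.inr (by simp)⟩
  · rw [h2]; abel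
  · intro h; exact hr (by simpa using h)
  · rw [h2]; abel

/-- The extra triples come from `w = e_j` and `w = e_k`. -/
lemma lt_of_squarefree {n : ℕ} {Λ : Finset (Fin n → ℕ)} (hΛ : IsOrderIdeal Λ) {u : Fin n → ℕ}
    (hu : u ∈ Λ) (i j k : Fin n) (hij : i ≠ j) (hik : i ≠ k) (hjk : j ≠ k)
    (hi : 1 ≤ u i) (hj : 1 ≤ u j) (hk : 1 ≤ u k) (hsq : ∀ k, u k ≤ 1) : WT Λ u < WB Λ u := by
  have hle : (Pi.single i 1 + Pi.single j 1 + Pi.single k 1 : Fin n → ℕ) ≤ u := by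
    intro l
    by_cases h1 : l = i
    · subst h1; simp [hij, hik]; omega
    · by_cases h2 : l = j
      · subst h2; simp [h1, hjk]; omega
      · by_cases h3 : l = k
        · subst h3; simp [h1, h2]; omega
        · simp [h1, h2, h3]
  obtain ⟨r, rfl⟩ := exists_add_of_le hle
  have hri : r i = 0 := by have := hsq i; simp [hij, hik] at this; omega
  have key : ∀ (v w : Fin n → ℕ) k, v k ≠ w k → v ≠ w := fun v w k h h' => h (by rw [h'])
  refine WT_lt_WB_of_two hΛ hu i hi (Or.inr hsq)
    (Pi.single j 1) (Pi.single k 1) (key _ _ j (by simp [hjk]))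
    ⟨key _ _ j (by simp), key _ _ j (by simp [hij.symm]), r + Pi.single k 1,
      key _ _ k (by simp), by abel, Or.inl (key _ _ i ?_)⟩
    ⟨key _ _ k (by simp), key _ _ k (by simp [hik.symm]), r + Pi.single j 1,
      key _ _ j (by simp), by abel, Or.inl (key _ _ i ?_)⟩
  · simp [hri, hik]
  · simp [hri, hij]

lemma lt_of_not_good {n : ℕ} {Λ : Finset (Fin n → ℕ)} (hΛ : IsOrderIdeal Λ) {u : Fin n → ℕ}
    (hu : u ∈ Λ) (hg : ¬ Good u) : WT Λ u < WB Λ u := by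
  by_cases c1 : ∀ (k : Fin n) (α : ℕ), 0 < α → Pi.single k α = u → α ≤ 4
  swap
  · push Not at c1
    obtain ⟨k, α, _, rfl, hα⟩ := c1
    exact lt_of_single hΛ k α hα hu
  by_cases c2 : ∀ k₁ k₂ : Fin n, k₁ < k₂ → ∀ α₁ α₂ : ℕ, 0 < α₁ → 0 < α₂ →
    Pi.single k₁ α₁ + Pi.single k₂ α₂ = u → α₁ + α₂ ≤ 3
  swap
  · push Not at c2
    obtain ⟨i, j, hij, a, b, ha, hb, rfl, hab⟩ := c2
    have hne : i ≠ j := hij.ne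
    by_cases ha2 : 2 ≤ a
    · refine lt_of_two hΛ hu i j hne (by simp [hne, ha2]) (by simp [hne.symm]; omega) ?_
      intro h
      have h1 := congrFun h i
      have h2 := congrFun h j
      simp [hne] at h1
      simp [hne.symm] at h2
      omega
    · refine lt_of_two hΛ hu j i hne.symm (by simp [hne.symm]; omega) (by simp [hne]; omega) ?_
      intro h
      have h1 := congrFun h i
      have h2 := congrFun h j
      simp [hne] at h1
      simp [hne.symm] at h2
      omega
  have c3 : 2 < (Finset.univ.filter (fun i : Fin n => u i ≠ 0)).card := by
    by_contra h
    exact hg ⟨c1, c2, not_lt.1 h⟩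
  by_cases h : ∃ l, 2 ≤ u l
  · obtain ⟨l, hl⟩ := h
    have hex : ∃ j, j ≠ l ∧ u j ≠ 0 := by
      obtain ⟨j, hj, hjl⟩ := Finset.exists_mem_ne
        (s := Finset.univ.filter (fun i : Fin n => u i ≠ 0)) (by omega) l
      exact ⟨j, hjl, by simpa using hj⟩
    obtain ⟨j, hjl, hj⟩ := hex
    refine lt_of_two hΛ hu l j hjl.symm hl (by omega) ?_
    intro heq
    have hsub : Finset.univ.filter (fun i : Fin n => u i ≠ 0) ⊆ {l, j} := by
      intro k hk
      simp only [Finset.mem_filter, Finset.mem_univ, true_and] at hk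
      simp only [Finset.mem_insert, Finset.mem_singleton]
      by_contra hcon
      push Not at hcon
      apply hk
      rw [heq]
      simp [hcon.1, hcon.2]
    have := (Finset.card_le_card hsub).trans Finset.card_le_two
    omega
  · push Not at h
    obtain ⟨i, j, k, hi, hj, hk, hij, hik, hjk⟩ := Finset.two_lt_card_iff.1 c3
    simp only [Finset.mem_filter, Finset.mem_univ, true_and] at hi hj hk
    exact lt_of_squarefree hΛ hu i j k hij hik hjk (by omega) (by omega) (by omega)
      fun k => Nat.lt_succ_iff.1 (h k)

/-! ### Equality at good vectors -/

lemma one_le_sum {n : ℕ} {v : Fin n → ℕ} (hv : v ≠ 0) : 1 ≤ ∑ k, v k := by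
  obtain ⟨i, hi⟩ := Function.ne_iff.1 hv
  have := Finset.single_le_sum (f := v) (fun _ _ => Nat.zero_le _) (Finset.mem_univ i)
  simp only [Pi.zero_apply] at hi
  omega

/-- In degree at most two there are no triples. -/
lemma triples_eq_empty {n : ℕ} {Λ : Finset (Fin n → ℕ)} (hΛ : IsOrderIdeal Λ) {u : Fin n → ℕ}
    (hu : u ∈ Λ) (h : ∑ k, u k ≤ 2) : triples Λ u = ∅ := by
  rw [Finset.eq_empty_iff_forall_notMem]
  rintro ⟨v, s, w⟩ ht
  rw [mem_triples hΛ hu] at ht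
  obtain ⟨h1, h2, h3, _, rfl⟩ := ht
  have := one_le_sum h1
  have := one_le_sum h2
  have := one_le_sum h3
  simp only [Pi.add_apply, Finset.sum_add_distrib] at h
  omega

/-- Any decomposition `u = v + w` into nonzero vectors makes `WT` nonnegative. -/
lemma WT_nonneg {n : ℕ} {Λ : Finset (Fin n → ℕ)} (hΛ : IsOrderIdeal Λ) {u : Fin n → ℕ}
    (hu : u ∈ Λ) (v w : Fin n → ℕ) (hv : v ≠ 0) (hw : w ≠ 0) (h : v + w = u) : 0 ≤ WT Λ u := by
  by_cases hunit : ∃ i : Fin n, u = Pi.single i 1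
  · rw [WT, if_pos hunit]
  · rw [WT_of_not_unit Λ hunit]
    have : 0 < (upairs Λ u).card := Finset.card_pos.2
      ⟨s(v, w), (mem_upairs hΛ hu v w).2 ⟨hv, hw, h⟩⟩
    omega

lemma one_le_WT {n : ℕ} {Λ : Finset (Fin n → ℕ)} (hΛ : IsOrderIdeal Λ) {u : Fin n → ℕ}
    (hu : u ∈ Λ) (v w v' w' : Fin n → ℕ) (hv : v ≠ 0) (hw : w ≠ 0) (h : v + w = u)
    (hv' : v' ≠ 0) (hw' : w' ≠ 0) (h' : v' + w' = u) (hne : s(v, w) ≠ s(v', w')) :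
    1 ≤ WT Λ u := by
  classical
  by_cases hunit : ∃ i : Fin n, u = Pi.single i 1
  · obtain ⟨i, hi⟩ := hunit
    have h1 := one_le_sum hv
    have h2 := one_le_sum hw
    have h3 : ∑ k, (v + w) k = ∑ k, (Pi.single i 1 : Fin n → ℕ) k := by rw [h, hi]
    simp only [Pi.add_apply, Finset.sum_add_distrib, Finset.sum_pi_single', Finset.mem_univ,
      if_true] at h3
    omega
  · rw [WT_of_not_unit Λ hunit]
    have hsub : ({s(v, w), s(v', w')} : Finset _) ⊆ upairs Λ u := by
      intro p hp
      simp only [Finset.mem_insert, Finset.mem_singleton] at hp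
      rcases hp with rfl | rfl
      · exact (mem_upairs hΛ hu _ _).2 ⟨hv, hw, h⟩
      · exact (mem_upairs hΛ hu _ _).2 ⟨hv', hw', h'⟩
    have := Finset.card_le_card hsub
    rw [Finset.card_pair hne] at this
    omega

/-- The vectors `e_i`, `2e_i`, `3e_i`, `4e_i`. -/
lemma ge_of_single {n : ℕ} {Λ : Finset (Fin n → ℕ)} (hΛ : IsOrderIdeal Λ) (i : Fin n) (α : ℕ)
    (hα0 : 0 < α) (hα : α ≤ 4) (hu : Pi.single i α ∈ Λ) :
    (WB Λ (Pi.single i α) : ℤ) ≤ WT Λ (Pi.single i α) := by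
  classical
  have hs0 : ∀ a : ℕ, a ≠ 0 → (Pi.single i a : Fin n → ℕ) ≠ 0 := by
    intro a ha h
    exact ha (Pi.single_eq_zero_iff.1 h)
  have hsum : ∀ a b : ℕ, a + b = α →
      (Pi.single i a + Pi.single i b : Fin n → ℕ) = Pi.single i α := by
    rintro a b rfl
    rw [Pi.single_add]
  have hform : ∀ v s w : Fin n → ℕ, (v, s, w) ∈ triples Λ (Pi.single i α) →
      ∃ a b c : ℕ, v = Pi.single i a ∧ s = Pi.single i b ∧ w = Pi.single i c ∧
        0 < a ∧ 0 < b ∧ 0 < c ∧ a ≠ c ∧ a + b + c = α := by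
    intro v s w ht
    rw [mem_triples hΛ hu] at ht
    obtain ⟨h1, h2, h3, h4, h5⟩ := ht
    have hk : ∀ k, k ≠ i → v k = 0 ∧ s k = 0 ∧ w k = 0 := by
      intro k hk
      have := congrFun h5 k
      simp only [Pi.add_apply, Pi.single_eq_of_ne hk] at this
      omega
    have hv : v = Pi.single i (v i) := by
      funext k
      by_cases h : k = i
      · subst h; simp
      · simp [h, (hk k h).1]
    have hs : s = Pi.single i (s i) := by
      funext k
      by_cases h : k = i
      · subst h; simp
      · simp [h, (hk k h).2.1]
    have hw : w = Pi.single i (w i) := by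
      funext k
      by_cases h : k = i
      · subst h; simp
      · simp [h, (hk k h).2.2]
    refine ⟨v i, s i, w i, hv, hs, hw, ?_, ?_, ?_, ?_, ?_⟩
    · rw [Nat.pos_iff_ne_zero]; intro h; rw [h] at hv; simp at hv; exact h1 hv
    · rw [Nat.pos_iff_ne_zero]; intro h; rw [h] at hs; simp at hs; exact h2 hs
    · rw [Nat.pos_iff_ne_zero]; intro h; rw [h] at hw; simp at hw; exact h3 hw
    · intro h; rw [h] at hv; exact h4 (hv.trans hw.symm)
    · have := congrFun h5 i
      simpa using this
  by_cases h4 : α = 4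
  · subst h4
    have h1 : 1 ≤ WT Λ (Pi.single i 4) := by
      refine one_le_WT hΛ hu (Pi.single i 1) (Pi.single i 3) (Pi.single i 2) (Pi.single i 2)
        (hs0 _ (by omega)) (hs0 _ (by omega)) (hsum _ _ rfl)
        (hs0 _ (by omega)) (hs0 _ (by omega)) (hsum _ _ rfl) ?_
      intro h
      simp only [Sym2.eq_iff, (Pi.single_injective i).eq_iff] at h
      omega
    have h2 : triples Λ (Pi.single i 4) ⊆ {(Pi.single i 1, Pi.single i 1, Pi.single i 2),
        (Pi.single i 2, Pi.single i 1, Pi.single i 1)} := by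
      rintro ⟨v, s, w⟩ ht
      obtain ⟨a, b, c, rfl, rfl, rfl, ha, hb, hc, hac, habc⟩ := hform v s w ht
      simp only [Finset.mem_insert, Finset.mem_singleton, Prod.mk.injEq,
        (Pi.single_injective i).eq_iff]
      omega
    have h3 := (Finset.card_le_card h2).trans Finset.card_le_two
    rw [WB_eq]
    omega
  · have hemp : triples Λ (Pi.single i α) = ∅ := by
      rw [Finset.eq_empty_iff_forall_notMem]
      rintro ⟨v, s, w⟩ ht
      obtain ⟨a, b, c, rfl, rfl, rfl, ha, hb, hc, hac, habc⟩ := hform v s w ht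
      omega
    have h0 : 0 ≤ WT Λ (Pi.single i α) := by
      by_cases h1 : α = 1
      · subst h1
        rw [WT, if_pos ⟨i, rfl⟩]
      · exact WT_nonneg hΛ hu (Pi.single i 1) (Pi.single i (α - 1)) (hs0 _ (by omega))
          (hs0 _ (by omega)) (hsum _ _ (by omega))
    rw [WB_eq, hemp]
    simpa using h0

/-- The vectors `2e_i + e_j`. -/
lemma ge_of_two_one {n : ℕ} {Λ : Finset (Fin n → ℕ)} (hΛ : IsOrderIdeal Λ) {i j : Fin n}
    (hij : i ≠ j) (hu : Pi.single i 2 + Pi.single j 1 ∈ Λ) :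
    (WB Λ (Pi.single i 2 + Pi.single j 1) : ℤ) ≤ WT Λ (Pi.single i 2 + Pi.single j 1) := by
  classical
  have key : ∀ (v w : Fin n → ℕ) k, v k ≠ w k → v ≠ w := fun v w k h h' => h (by rw [h'])
  have hi2 : (Pi.single i 2 : Fin n → ℕ) = Pi.single i 1 + Pi.single i 1 := by
    rw [← Pi.single_add]
  have h1 : 1 ≤ WT Λ (Pi.single i 2 + Pi.single j 1) := by
    refine one_le_WT hΛ hu (Pi.single i 1) (Pi.single i 1 + Pi.single j 1) (Pi.single i 2)
      (Pi.single j 1) (key _ _ i (by simp)) (key _ _ i (by simp [hij])) (by rw [hi2]; abel)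
      (key _ _ i (by simp)) (key _ _ j (by simp)) rfl ?_
    intro h
    rw [Sym2.eq_iff] at h
    rcases h with ⟨h, _⟩ | ⟨h, _⟩
    · exact key _ _ i (by simp) h
    · exact key _ _ i (by simp [hij]) h
  have h2 : triples Λ (Pi.single i 2 + Pi.single j 1) ⊆
      {(Pi.single i 1, Pi.single i 1, Pi.single j 1),
        (Pi.single j 1, Pi.single i 1, Pi.single i 1)} := by
    rintro ⟨v, s, w⟩ ht
    rw [mem_triples hΛ hu] at ht
    obtain ⟨h1, h2, h3, h4, h5⟩ := ht
    have hk : ∀ k, k ≠ i → k ≠ j → v k = 0 ∧ s k = 0 ∧ w k = 0 := by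
      intro k hk hk'
      have := congrFun h5 k
      simp only [Pi.add_apply, Pi.single_eq_of_ne hk, Pi.single_eq_of_ne hk'] at this
      omega
    have hform : ∀ x : Fin n → ℕ, (∀ k, k ≠ i → k ≠ j → x k = 0) → ∀ a b, x i = a → x j = b →
        x = Pi.single i a + Pi.single j b := by
      rintro x hx a b rfl rfl
      funext k
      by_cases h : k = i
      · subst h; simp [hij]
      · by_cases h' : k = j
        · subst h'; simp [h]
        · simp [h, h', hx k h h']
    have hv := hform v fun k a b => (hk k a b).1
    have hs := hform s fun k a b => (hk k a b).2.1
    have hw := hform w fun k a b => (hk k a b).2.2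
    have hv0 : ¬ (v i = 0 ∧ v j = 0) := fun h => h1 (by simpa using hv 0 0 h.1 h.2)
    have hs0 : ¬ (s i = 0 ∧ s j = 0) := fun h => h2 (by simpa using hs 0 0 h.1 h.2)
    have hw0 : ¬ (w i = 0 ∧ w j = 0) := fun h => h3 (by simpa using hw 0 0 h.1 h.2)
    have hvw : ¬ (v i = w i ∧ v j = w j) :=
      fun h => h4 ((hv _ _ h.1 h.2).trans (hw _ _ rfl rfl).symm)
    have ei := congrFun h5 i
    have ej := congrFun h5 j
    simp [hij] at ei
    simp [hij.symm] at ej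
    have hcase : (v i = 1 ∧ v j = 0 ∧ s i = 1 ∧ s j = 0 ∧ w i = 0 ∧ w j = 1) ∨
        (v i = 0 ∧ v j = 1 ∧ s i = 1 ∧ s j = 0 ∧ w i = 1 ∧ w j = 0) := by omega
    simp only [Finset.mem_insert, Finset.mem_singleton, Prod.mk.injEq]
    rcases hcase with ⟨a, b, c, d, e, f⟩ | ⟨a, b, c, d, e, f⟩
    · exact Or.inl ⟨by simpa using hv _ _ a b, by simpa using hs _ _ c d, by simpa using hw _ _ e f⟩
    · exact Or.inr ⟨by simpa using hv _ _ a b, by simpa using hs _ _ c d, by simpa using hw _ _ e f⟩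
  have h3 := (Finset.card_le_card h2).trans Finset.card_le_two
  rw [WB_eq]
  omega

/-- The vectors `e_i + e_j`. -/
lemma ge_of_one_one {n : ℕ} {Λ : Finset (Fin n → ℕ)} (hΛ : IsOrderIdeal Λ) {i j : Fin n}
    (hu : Pi.single i 1 + Pi.single j 1 ∈ Λ) :
    (WB Λ (Pi.single i 1 + Pi.single j 1) : ℤ) ≤ WT Λ (Pi.single i 1 + Pi.single j 1) := by
  rw [WB_eq, triples_eq_empty hΛ hu (by simp [Finset.sum_add_distrib])]
  simpa using WT_nonneg hΛ hu (Pi.single i 1) (Pi.single j 1) (by simp) (by simp) rfl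

lemma ge_of_good {n : ℕ} {Λ : Finset (Fin n → ℕ)} (hΛ : IsOrderIdeal Λ) {u : Fin n → ℕ}
    (hu : u ∈ Λ) (hu0 : u ≠ 0) (hg : Good u) : (WB Λ u : ℤ) ≤ WT Λ u := by
  obtain ⟨c1, c2, c3⟩ := hg
  obtain ⟨i, hi⟩ := Function.ne_iff.1 hu0
  simp only [Pi.zero_apply] at hi
  by_cases h : ∃ j, j ≠ i ∧ u j ≠ 0
  · obtain ⟨j, hji, hj⟩ := h
    have hform : u = Pi.single i (u i) + Pi.single j (u j) := by
      funext k
      by_cases h : k = i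
      · subst h; simp [hji.symm]
      · by_cases h' : k = j
        · subst h'; simp [h]
        · have : u k = 0 := by
            by_contra hk
            have : 2 < (Finset.univ.filter (fun i : Fin n => u i ≠ 0)).card :=
              Finset.two_lt_card_iff.2 ⟨i, j, k, by simpa using hi, by simpa using hj,
                by simpa using hk, hji.symm, Ne.symm h, Ne.symm h'⟩
            omega
          simp [h, h', this]
    have hle : u i + u j ≤ 3 := by
      rcases lt_or_gt_of_ne hji with hlt | hlt
      · have := c2 j i hlt (u j) (u i) (by omega) (by omega) (by rw [add_comm, ← hform])
        omega
      · exact c2 i j hlt (u i) (u j) (by omega) (by omega) hform.symm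
    generalize u i = a at *
    generalize u j = b at *
    subst hform
    have : (a = 1 ∧ b = 1) ∨ (a = 2 ∧ b = 1) ∨ (a = 1 ∧ b = 2) := by omega
    rcases this with ⟨rfl, rfl⟩ | ⟨rfl, rfl⟩ | ⟨rfl, rfl⟩
    · exact ge_of_one_one hΛ hu
    · exact ge_of_two_one hΛ hji.symm hu
    · rw [add_comm] at hu ⊢
      exact ge_of_two_one hΛ hji hu
  · push Not at h
    have hform : u = Pi.single i (u i) := by
      funext k
      by_cases hk : k = i
      · subst hk; simp
      · simp [hk, h k hk]
    have hle := c1 i (u i) (by omega) hform.symm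
    generalize u i = a at *
    subst hform
    exact ge_of_single hΛ i a (by omega) hle hu

/-- For a finite nonempty order ideal `λ ⊆ ℕ^n`, the equality
`Σ_{u ∈ λ∖{0}} W_T(u) = Σ_{u ∈ λ∖{0}} W_B(u)` holds iff (1) `α·e_k ∈ λ` implies `α ≤ 4`;
(2) `α₁·e_{k₁} + α₂·e_{k₂} ∈ λ` for `k₁ < k₂`, `α₁, α₂ > 0` implies `α₁ + α₂ ≤ 3`; and
(3) no element of `λ` has three or more nonzero coordinates.  (This characterizes the
admissible partitions.) -/
theorem admissible_iff {n : ℕ} (Λ : Finset (Fin n → ℕ)) (hΛ : IsOrderIdeal Λ)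
    (hne : Λ.Nonempty) :
    (∑ u ∈ Λ.erase 0, WT Λ u = ∑ u ∈ Λ.erase 0, (WB Λ u : ℤ)) ↔
    ((∀ (k : Fin n) (α : ℕ), 0 < α → Pi.single k α ∈ Λ → α ≤ 4) ∧
     (∀ k₁ k₂ : Fin n, k₁ < k₂ → ∀ α₁ α₂ : ℕ, 0 < α₁ → 0 < α₂ →
        Pi.single k₁ α₁ + Pi.single k₂ α₂ ∈ Λ → α₁ + α₂ ≤ 3) ∧
     (∀ u ∈ Λ, (Finset.univ.filter (fun i : Fin n => u i ≠ 0)).card ≤ 2)) := by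
  have hle : ∀ u ∈ Λ.erase 0, WT Λ u ≤ (WB Λ u : ℤ) := fun u hu =>
    WT_le_WB hΛ (Finset.mem_of_mem_erase hu) (Finset.ne_of_mem_erase hu)
  rw [Finset.sum_eq_sum_iff_of_le hle]
  constructor
  · intro h
    have hgood : ∀ u ∈ Λ, Good u := by
      intro u hu
      by_cases hu0 : u = 0
      · subst hu0
        refine ⟨?_, ?_, by simp⟩
        · intro k α hα h0
          rw [Pi.single_eq_zero_iff] at h0
          omega
        · intro k₁ k₂ _ α₁ α₂ h1 _ h0
          have := congrFun h0 k₁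
          simp at this
          omega
      · by_contra hg
        exact (lt_of_not_good hΛ hu hg).ne (h u (Finset.mem_erase.2 ⟨hu0, hu⟩))
    exact ⟨fun k α hα hu => (hgood _ hu).1 k α hα rfl,
      fun k₁ k₂ hk α₁ α₂ h1 h2 hu => (hgood _ hu).2.1 k₁ k₂ hk α₁ α₂ h1 h2 rfl,
      fun u hu => (hgood u hu).2.2⟩
  · rintro ⟨c1, c2, c3⟩ u hu
    have huΛ := Finset.mem_of_mem_erase hu
    refine le_antisymm (hle u hu) (ge_of_good hΛ huΛ (Finset.ne_of_mem_erase hu) ⟨?_, ?_, c3 u huΛ⟩)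
    · rintro k α hα rfl
      exact c1 k α hα huΛ
    · rintro k₁ k₂ hk α₁ α₂ h1 h2 rfl
      exact c2 k₁ k₂ hk α₁ α₂ h1 h2 huΛ
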